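/- arXiv:2505.16071 — 4 statements merged into one kernel-verified Lean document; each statement's English description precedes it below -/
import Mathlib

section
/- Let k̂, n̂ ∈ ℝ³ be unit vectors with n̂ not parallel to k̂, and let h, h' ∈ {+1, −1}. Then the Levi-Civita contraction of polarisation tensors satisfies Σ_{i,j,l,m} ε_{ijm} k̂_m e^{(h)}_{lj}(−k̂) e^{(h')}_{li}(k̂) = −2 i h if h = h' and 0 if h ≠ h', where ε_{ijm} is the totally antisymmetric Levi-Civita symbol on three indices with ε_{123} = 1, and both polarisation tensors are built from the same reference vector n̂. -/
open scoped BigOperators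

noncomputable section

/-- Euclidean dot product on ℝ³ (realised as `Fin 3 → ℝ`). -/
def dot3 (v w : Fin 3 → ℝ) : ℝ := ∑ i, v i * w i

/-- Cross product on ℝ³. -/
def cross3 (v w : Fin 3 → ℝ) : Fin 3 → ℝ :=
  ![v 1 * w 2 - v 2 * w 1, v 2 * w 0 - v 0 * w 2, v 0 * w 1 - v 1 * w 0]

/-- The complex polarisation vector
`ê^{h}(k̂) = (n̂ − (n̂·k̂)k̂ + h i k̂×n̂)/√(2(1−(n̂·k̂)²))` for helicity `h = ±1`. -/
def polVec (h : ℝ) (k n : Fin 3 → ℝ) : Fin 3 → ℂ := fun i =>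
  (((n i - dot3 n k * k i : ℝ) : ℂ) + (h : ℂ) * Complex.I * ((cross3 k n i : ℝ) : ℂ)) /
    ((Real.sqrt (2 * (1 - dot3 n k ^ 2)) : ℝ) : ℂ)

/-- The polarisation tensor `e^{(h)}_{ij}(k̂) = √2 ê^{h}_i(k̂) ê^{h}_j(k̂)`. -/
def polTensor (h : ℝ) (k n : Fin 3 → ℝ) (i j : Fin 3) : ℂ :=
  ((Real.sqrt 2 : ℝ) : ℂ) * polVec h k n i * polVec h k n j

/-- The totally antisymmetric Levi-Civita symbol on three indices, with `ε 0 1 2 = 1`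
(indices `0,1,2` standing for `1,2,3`). -/
def lev (i j m : Fin 3) : ℝ :=
  (((j : ℕ) : ℝ) - ((i : ℕ) : ℝ)) * (((m : ℕ) : ℝ) - ((j : ℕ) : ℝ)) *
    (((m : ℕ) : ℝ) - ((i : ℕ) : ℝ)) / 2

/-- Purely algebraic form of the contraction. -/
theorem lev_contract (K u v : Fin 3 → ℂ) (t : ℂ) :
    ∑ i, ∑ j, ∑ l, ∑ m,
        ((lev i j m : ℝ) : ℂ) * K m * (t * u l * u j) * (t * v l * v i)
      = t ^ 2 * (u 0 * v 0 + u 1 * v 1 + u 2 * v 2) *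
        (K 0 * (v 1 * u 2 - v 2 * u 1) + K 1 * (v 2 * u 0 - v 0 * u 2)
          + K 2 * (v 0 * u 1 - v 1 * u 0)) := by
  simp only [Fin.sum_univ_three, lev]
  norm_num
  ring

/-- Contraction for vectors of the form a - i h b and a + i h b over N. -/
theorem lev_contract_ab (K a b : Fin 3 → ℂ) (s N t h h' : ℂ)
    (ht : t ^ 2 = 2) (hN : N ^ 2 = 2 * s) (hs : s ≠ 0)
    (haa : a 0 * a 0 + a 1 * a 1 + a 2 * a 2 = s)
    (hbb : b 0 * b 0 + b 1 * b 1 + b 2 * b 2 = s)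
    (hab : a 0 * b 0 + a 1 * b 1 + a 2 * b 2 = 0)
    (hK : K 0 * (a 1 * b 2 - a 2 * b 1) + K 1 * (a 2 * b 0 - a 0 * b 2)
          + K 2 * (a 0 * b 1 - a 1 * b 0) = s) (u v : Fin 3 → ℂ)
    (hu : ∀ i, u i = (a i - h * Complex.I * b i) / N)
    (hv : ∀ i, v i = (a i + h' * Complex.I * b i) / N) :
    t ^ 2 * (u 0 * v 0 + u 1 * v 1 + u 2 * v 2) *
        (K 0 * (v 1 * u 2 - v 2 * u 1) + K 1 * (v 2 * u 0 - v 0 * u 2)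
          + K 2 * (v 0 * u 1 - v 1 * u 0))
      = - Complex.I * (1 + h * h') * (h + h') / 2 := by
  have hI := Complex.I_sq
  have h1 : u 0 * v 0 + u 1 * v 1 + u 2 * v 2 = (1 + h * h') / 2 := by
    have : u 0 * v 0 + u 1 * v 1 + u 2 * v 2 = (s * (1 + h * h')) / N ^ 2 := by
      simp only [hu, hv, div_mul_div_comm, ← add_div, ← sq]
      congr 1
      linear_combination haa + h * h' * hbb + (h' - h) * Complex.I * hab
        - h * h' * (b 0 * b 0 + b 1 * b 1 + b 2 * b 2) * hI
    rw [this, hN]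
    field_simp
  have h2 : K 0 * (v 1 * u 2 - v 2 * u 1) + K 1 * (v 2 * u 0 - v 0 * u 2)
          + K 2 * (v 0 * u 1 - v 1 * u 0) = - Complex.I * (h + h') / 2 := by
    have : K 0 * (v 1 * u 2 - v 2 * u 1) + K 1 * (v 2 * u 0 - v 0 * u 2)
          + K 2 * (v 0 * u 1 - v 1 * u 0) = (- Complex.I * (h + h') * s) / N ^ 2 := by
      simp only [hu, hv]
      linear_combination (- Complex.I * (h + h')) / N ^ 2 * hK
    rw [this, hN]
    field_simp
  rw [h1, h2, ht]
  ring

/-- The Levi-Civita contraction of polarisation tensors: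
`Σ_{i,j,l,m} ε_{ijm} k̂_m e^{(h)}_{lj}(−k̂) e^{(h')}_{li}(k̂) = −2 i h δ_{hh'}`. -/
theorem polTensor_leviCivita_contraction (k n : Fin 3 → ℝ)
    (hk : dot3 k k = 1) (hn : dot3 n n = 1)
    (hpar : ¬ ∃ c : ℝ, n = c • k) (h h' : ℝ)
    (hh : h = 1 ∨ h = -1) (hh' : h' = 1 ∨ h' = -1) :
    ∑ i, ∑ j, ∑ l, ∑ m,
        ((lev i j m : ℝ) : ℂ) * ((k m : ℝ) : ℂ) * polTensor h (-k) n l j * polTensor h' k n l i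
      = if h = h' then -2 * Complex.I * (h : ℂ) else 0 := by
  have hk' := hk
  have hn' := hn
  simp only [dot3, Fin.sum_univ_three] at hk' hn'
  obtain ⟨d, hd⟩ : ∃ d, d = dot3 n k := ⟨_, rfl⟩
  have hd' := hd
  simp only [dot3, Fin.sum_univ_three] at hd'
  have hneg : dot3 n (-k) = -d := by
    rw [hd']; simp only [dot3, Fin.sum_univ_three, Pi.neg_apply]; ring
  obtain ⟨a, ha⟩ : ∃ a : Fin 3 → ℝ, ∀ i, a i = n i - d * k i := ⟨_, fun _ => rfl⟩
  obtain ⟨b, hb⟩ : ∃ b : Fin 3 → ℝ, b = cross3 k n := ⟨_, rfl⟩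
  have b0 : b 0 = k 1 * n 2 - k 2 * n 1 := by simp [hb, cross3]
  have b1 : b 1 = k 2 * n 0 - k 0 * n 2 := by simp [hb, cross3]
  have b2 : b 2 = k 0 * n 1 - k 1 * n 0 := by simp [hb, cross3]
  have hbn : ∀ i, cross3 (-k) n i = - b i := by
    intro i; rw [hb]; fin_cases i <;> simp [cross3] <;> ring
  have haa : a 0 * a 0 + a 1 * a 1 + a 2 * a 2 = 1 - d ^ 2 := by
    simp only [ha]
    linear_combination hn' + d ^ 2 * hk' + 2 * d * hd'
  have hab : a 0 * b 0 + a 1 * b 1 + a 2 * b 2 = 0 := by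
    simp only [ha, b0, b1, b2]; ring
  have hbb : b 0 * b 0 + b 1 * b 1 + b 2 * b 2 = 1 - d ^ 2 := by
    rw [b0, b1, b2, hd']
    linear_combination (n 0 * n 0 + n 1 * n 1 + n 2 * n 2) * hk' + hn'
  have hK : k 0 * (a 1 * b 2 - a 2 * b 1) + k 1 * (a 2 * b 0 - a 0 * b 2)
          + k 2 * (a 0 * b 1 - a 1 * b 0) = 1 - d ^ 2 := by
    rw [← hbb]
    simp only [ha, b0, b1, b2]; ring
  have q0 := mul_self_nonneg (a 0)
  have q1 := mul_self_nonneg (a 1)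
  have q2 := mul_self_nonneg (a 2)
  have hspos : 0 < 1 - d ^ 2 := by
    rcases (show 0 ≤ 1 - d ^ 2 by linarith).lt_or_eq with hlt | heq
    · exact hlt
    · exfalso
      apply hpar
      refine ⟨d, ?_⟩
      have h0 : a 0 = 0 := mul_self_eq_zero.mp (by linarith)
      have h1 : a 1 = 0 := mul_self_eq_zero.mp (by linarith)
      have h2 : a 2 = 0 := mul_self_eq_zero.mp (by linarith)
      rw [ha] at h0 h1 h2
      funext i
      match i with
      | 0 => exact sub_eq_zero.mp h0
      | 1 => exact sub_eq_zero.mp h1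
      | 2 => exact sub_eq_zero.mp h2
  have ht : ((Real.sqrt 2 : ℝ) : ℂ) ^ 2 = 2 := by
    rw [← Complex.ofReal_pow, Real.sq_sqrt (by norm_num)]; norm_num
  have hN : ((Real.sqrt (2 * (1 - d ^ 2)) : ℝ) : ℂ) ^ 2 = 2 * ((1 - d ^ 2 : ℝ) : ℂ) := by
    rw [← Complex.ofReal_pow, Real.sq_sqrt (by linarith)]; push_cast; ring
  have hs : ((1 - d ^ 2 : ℝ) : ℂ) ≠ 0 := by exact_mod_cast hspos.ne'
  have hu : ∀ i, polVec h (-k) n i = ((a i : ℂ) - h * Complex.I * (b i : ℂ)) /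
      ((Real.sqrt (2 * (1 - d ^ 2)) : ℝ) : ℂ) := by
    intro i
    simp only [polVec, hneg, hbn, ha, Pi.neg_apply, neg_sq]
    push_cast
    congr 1
    ring
  have hv : ∀ i, polVec h' k n i = ((a i : ℂ) + h' * Complex.I * (b i : ℂ)) /
      ((Real.sqrt (2 * (1 - d ^ 2)) : ℝ) : ℂ) := by
    intro i
    simp only [polVec, ← hd, ← hb, ha]
  simp only [polTensor]
  rw [lev_contract (fun m => (k m : ℂ)),
    lev_contract_ab (fun m => (k m : ℂ)) (fun m => (a m : ℂ)) (fun m => (b m : ℂ))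
      ((1 - d ^ 2 : ℝ) : ℂ) _ _ h h' ht hN hs (by exact_mod_cast haa) (by exact_mod_cast hbb)
      (by exact_mod_cast hab) (by exact_mod_cast hK) _ _ hu hv]
  rcases hh with rfl | rfl <;> rcases hh' with rfl | rfl <;> norm_num <;> ring

end
end

section
/- Let k₁, k₂, k₃ ∈ ℂ each have strictly negative imaginary part, set E := k₁ + k₂ + k₃, e₂ := k₁k₂ + k₁k₃ + k₂k₃, e₃ := k₁k₂k₃ (note E ≠ 0 since Im E < 0). For η₀ < 0 the integral J(η₀) := ∫_{−∞}^{η₀} η^{−2} (1 − i k₁ η)(1 − i k₂ η)(1 − i k₃ η) e^{iEη} dη converges, and the boundary-divergence-subtracted limit exists and equals lim_{η₀ → 0⁻} [ J(η₀) + 1/η₀ ] = i·(−E³ + E·e₂ + e₃)/E². (This is the exact evaluation of the time integral producing the mixed inflaton–graviton cubic wavefunction coefficient, whose 1/η₀ piece is the IR divergence residing in the phase of the wavefunction.) -/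
open Filter MeasureTheory

noncomputable section

/-- The integrand `η^{−2} (1 − i k₁ η)(1 − i k₂ η)(1 − i k₃ η) e^{i(k₁+k₂+k₃)η}`
producing the mixed inflaton–graviton cubic wavefunction coefficient. -/
def cubicIntegrand (k₁ k₂ k₃ : ℂ) (η : ℝ) : ℂ :=
  ((η : ℂ) ^ 2)⁻¹ * (1 - Complex.I * k₁ * η) * (1 - Complex.I * k₂ * η) *
    (1 - Complex.I * k₃ * η) * Complex.exp (Complex.I * (k₁ + k₂ + k₃) * η)

/-- `exp (c η) → 0` at `-∞` when `Re c > 0`. -/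
lemma tendsto_cexp_aux (c : ℂ) (hc : 0 < c.re) :
    Tendsto (fun η : ℝ => Complex.exp (c * η)) atBot (nhds 0) := by
  rw [tendsto_zero_iff_norm_tendsto_zero]
  simp only [Complex.norm_exp, Complex.re_mul_ofReal]
  exact Real.tendsto_exp_atBot.comp (tendsto_id.const_mul_atBot hc)

/-- `η exp (c η) → 0` at `-∞` when `Re c > 0`. -/
lemma tendsto_mul_cexp_aux (c : ℂ) (hc : 0 < c.re) :
    Tendsto (fun η : ℝ => (η : ℂ) * Complex.exp (c * η)) atBot (nhds 0) := by
  rw [tendsto_zero_iff_norm_tendsto_zero]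
  have h := (tendsto_rpow_mul_exp_neg_mul_atTop_nhds_zero 1 c.re hc).comp tendsto_neg_atBot_atTop
  refine h.congr' ?_
  filter_upwards [eventually_le_atBot (0 : ℝ)] with x hx
  simp [Complex.norm_exp, abs_of_nonpos hx]

lemma tendsto_inv_aux : Tendsto (fun η : ℝ => ((η : ℂ))⁻¹) atBot (nhds 0) := by
  have h : Tendsto (fun η : ℝ => ((η⁻¹ : ℝ) : ℂ)) atBot (nhds ((0 : ℝ) : ℂ)) :=
    (Complex.continuous_ofReal.tendsto 0).comp tendsto_inv_atBot_zero
  simpa using h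

/-- Laurent form of the integrand. -/
lemma cubicIntegrand_eq_aux (k₁ k₂ k₃ : ℂ) (η : ℝ) (h : η ≠ 0) :
    cubicIntegrand k₁ k₂ k₃ η =
      ((η : ℂ)⁻¹ ^ 2 - Complex.I * (k₁ + k₂ + k₃) * (η : ℂ)⁻¹
        - (k₁ * k₂ + k₁ * k₃ + k₂ * k₃) + Complex.I * (k₁ * k₂ * k₃) * η)
        * Complex.exp (Complex.I * (k₁ + k₂ + k₃) * η) := by
  have h' : (η : ℂ) ≠ 0 := by exact_mod_cast h
  unfold cubicIntegrand
  rw [← sub_eq_zero, ← sub_mul]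
  refine mul_eq_zero_of_left ?_ _
  field_simp
  linear_combination ((k₁ * k₂ + k₁ * k₃ + k₂ * k₃) * (η : ℂ) ^ 2
    - Complex.I * k₁ * k₂ * k₃ * (η : ℂ) ^ 3) * Complex.I_sq

lemma cubicIntegrand_integrableOn_aux (k₁ k₂ k₃ : ℂ)
    (ha : 0 < (Complex.I * (k₁ + k₂ + k₃)).re) (η₀ : ℝ) (h0 : η₀ < 0) :
    IntegrableOn (cubicIntegrand k₁ k₂ k₃) (Set.Iic η₀) := by
  rw [integrableOn_Iic_iff_integrableAtFilter_atBot]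
  have hcont : ContinuousOn (cubicIntegrand k₁ k₂ k₃) (Set.Iic η₀) := by
    unfold cubicIntegrand
    have : ∀ x ∈ Set.Iic η₀, (x : ℂ) ^ 2 ≠ 0 := by
      intro x hx
      have : x ≠ 0 := (lt_of_le_of_lt hx h0).ne
      exact pow_ne_zero _ (by exact_mod_cast this)
    have h2 : ContinuousOn (fun x : ℝ => ((x : ℂ) ^ 2)⁻¹) (Set.Iic η₀) :=
      ContinuousOn.inv₀ (by fun_prop) this
    fun_prop
  have hloc := hcont.locallyIntegrableOn (μ := volume) measurableSet_Iic
  refine ⟨?_, hloc⟩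
  set a := Complex.I * (k₁ + k₂ + k₃) with hadef
  have hc : 0 < (a / 2).re := by simpa using ha
  have hint : IntegrableAtFilter (fun η : ℝ => Complex.exp (a / 2 * η)) atBot volume :=
    ⟨Set.Iic 0, Iic_mem_atBot 0, integrableOn_exp_mul_complex_Iic hc 0⟩
  have hmeas : StronglyMeasurableAtFilter (cubicIntegrand k₁ k₂ k₃) atBot volume :=
    ⟨Set.Iic η₀, Iic_mem_atBot _, hcont.aestronglyMeasurable measurableSet_Iic⟩
  refine Asymptotics.IsBigO.integrableAtFilter ?_ hmeas hint
  have ht : Tendsto (fun η : ℝ => ((η : ℂ)⁻¹ ^ 2 - a * (η : ℂ)⁻¹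
        - (k₁ * k₂ + k₁ * k₃ + k₂ * k₃)) * Complex.exp (a / 2 * η)
        + Complex.I * (k₁ * k₂ * k₃) * ((η : ℂ) * Complex.exp (a / 2 * η))) atBot
      (nhds (((0 : ℂ) ^ 2 - a * 0 - (k₁ * k₂ + k₁ * k₃ + k₂ * k₃)) * 0
        + Complex.I * (k₁ * k₂ * k₃) * 0)) :=
    ((((tendsto_inv_aux.pow 2).sub (tendsto_inv_aux.const_mul a)).sub_const _).mul
      (tendsto_cexp_aux _ hc)).add ((tendsto_mul_cexp_aux _ hc).const_mul _)
  have hO := (ht.isBigO_one ℂ).mul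
    (Asymptotics.isBigO_refl (fun η : ℝ => Complex.exp (a / 2 * η)) atBot)
  refine hO.congr' ?_ ?_
  · filter_upwards [eventually_lt_atBot (0 : ℝ)] with x hx
    rw [cubicIntegrand_eq_aux _ _ _ _ hx.ne, ← hadef]
    have : Complex.exp (a * x) = Complex.exp (a / 2 * x) * Complex.exp (a / 2 * x) := by
      rw [← Complex.exp_add]; congr 1; ring
    rw [this]; ring
  · exact Eventually.of_forall fun x => by simp

/-- The primitive of the integrand. -/
def cubicPrimitive (a e₂ e₃ : ℂ) (η : ℝ) : ℂ :=
  (-(η : ℂ)⁻¹ - e₂ / a + Complex.I * e₃ * (η / a - 1 / a ^ 2)) * Complex.exp (a * η)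

lemma hasDerivAt_cubicPrimitive (a e₂ e₃ : ℂ) (ha : a ≠ 0) (η : ℝ) (h : η ≠ 0) :
    HasDerivAt (cubicPrimitive a e₂ e₃)
      (((η : ℂ)⁻¹ ^ 2 - a * (η : ℂ)⁻¹ - e₂ + Complex.I * e₃ * η) * Complex.exp (a * η)) η := by
  have h' : (η : ℂ) ≠ 0 := by exact_mod_cast h
  have hz : HasDerivAt (fun z : ℂ =>
      (-z⁻¹ - e₂ / a + Complex.I * e₃ * (z / a - 1 / a ^ 2)) * Complex.exp (a * z))
      ((-(-((η : ℂ) ^ 2)⁻¹) + Complex.I * e₃ * (1 / a)) * Complex.exp (a * η)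
        + (-(η : ℂ)⁻¹ - e₂ / a + Complex.I * e₃ * (η / a - 1 / a ^ 2))
          * (Complex.exp (a * η) * (a * 1))) (η : ℂ) :=
    (((hasDerivAt_inv h').neg.sub_const _).add
      ((((hasDerivAt_id (η : ℂ)).div_const a).sub_const _).const_mul _)).mul
      (((hasDerivAt_id (η : ℂ)).const_mul a).cexp)
  refine hz.comp_ofReal.congr_deriv ?_
  field_simp
  ring

lemma tendsto_cubicPrimitive (a e₂ e₃ : ℂ) (ha : 0 < a.re) :
    Tendsto (cubicPrimitive a e₂ e₃) atBot (nhds 0) := by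
  have ht : Tendsto (fun η : ℝ => (-(η : ℂ)⁻¹ - e₂ / a - Complex.I * e₃ / a ^ 2)
        * Complex.exp (a * η) + Complex.I * e₃ / a * ((η : ℂ) * Complex.exp (a * η))) atBot
      (nhds ((-0 - e₂ / a - Complex.I * e₃ / a ^ 2) * 0 + Complex.I * e₃ / a * 0)) :=
    (((tendsto_inv_aux.neg.sub_const _).sub_const _).mul
      (tendsto_cexp_aux _ ha)).add ((tendsto_mul_cexp_aux _ ha).const_mul _)
  simp only [mul_zero, add_zero] at ht
  refine ht.congr fun η => ?_
  unfold cubicPrimitive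
  ring

lemma tendsto_cubicPrimitive_zero (a e₂ e₃ : ℂ) :
    Tendsto (fun η : ℝ => cubicPrimitive a e₂ e₃ η + 1 / (η : ℂ)) (nhdsWithin 0 (Set.Iio 0))
      (nhds (-a + (-e₂ / a - Complex.I * e₃ / a ^ 2))) := by
  have hd : HasDerivAt (fun η : ℝ => Complex.exp (a * η)) a 0 := by
    have : HasDerivAt (fun z : ℂ => Complex.exp (a * z))
        (Complex.exp (a * ((0 : ℝ) : ℂ)) * (a * 1)) ((0 : ℝ) : ℂ) :=
      ((hasDerivAt_id _).const_mul a).cexp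
    simpa using this.comp_ofReal
  have hs := hd.tendsto_slope.mono_left
    (nhdsWithin_mono 0 (fun x (hx : x < 0) => hx.ne) :
      nhdsWithin (0 : ℝ) (Set.Iio 0) ≤ nhdsWithin 0 {0}ᶜ)
  have hc : Tendsto (fun η : ℝ => (- e₂ / a + Complex.I * e₃ * (η / a - 1 / a ^ 2))
      * Complex.exp (a * η)) (nhdsWithin 0 (Set.Iio 0))
      (nhds (-e₂ / a - Complex.I * e₃ / a ^ 2)) := by
    have : Continuous (fun η : ℝ => (- e₂ / a + Complex.I * e₃ * (η / a - 1 / a ^ 2))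
      * Complex.exp (a * η)) := by fun_prop
    have h := (this.tendsto 0).mono_left (nhdsWithin_le_nhds (s := Set.Iio 0))
    convert h using 2
    simp
    ring
  refine (hs.neg.add hc).congr fun η => ?_
  simp only [slope, cubicPrimitive, vsub_eq_sub, Complex.real_smul]
  simp
  ring

/-- With each `kⱼ` given a strictly negative imaginary part (Bunch–Davies iε
prescription), the integral `J(η₀) = ∫_{−∞}^{η₀}` of the cubic integrand converges
for every `η₀ < 0`, and the boundary-divergence-subtracted limit is
`lim_{η₀→0⁻} [J(η₀) + 1/η₀] = i (−E³ + E e₂ + e₃)/E²` where `E = k₁+k₂+k₃`,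
`e₂ = k₁k₂+k₁k₃+k₂k₃`, `e₃ = k₁k₂k₃`. -/
theorem cubic_wavefunction_integral (k₁ k₂ k₃ : ℂ)
    (h₁ : k₁.im < 0) (h₂ : k₂.im < 0) (h₃ : k₃.im < 0) :
    (∀ η₀ : ℝ, η₀ < 0 → IntegrableOn (cubicIntegrand k₁ k₂ k₃) (Set.Iic η₀)) ∧
    Tendsto
      (fun η₀ : ℝ => (∫ η in Set.Iic η₀, cubicIntegrand k₁ k₂ k₃ η) + 1 / (η₀ : ℂ))
      (nhdsWithin 0 (Set.Iio 0))
      (nhds (Complex.I *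
        (-(k₁ + k₂ + k₃) ^ 3 + (k₁ + k₂ + k₃) * (k₁ * k₂ + k₁ * k₃ + k₂ * k₃)
          + k₁ * k₂ * k₃) / (k₁ + k₂ + k₃) ^ 2)) := by
  have ha : 0 < (Complex.I * (k₁ + k₂ + k₃)).re := by
    simp
    linarith
  have hint := cubicIntegrand_integrableOn_aux k₁ k₂ k₃ ha
  have hne : Complex.I * (k₁ + k₂ + k₃) ≠ 0 := by
    intro h
    rw [h] at ha
    simp at ha
  have hE : k₁ + k₂ + k₃ ≠ 0 := right_ne_zero_of_mul hne
  refine ⟨hint, ?_⟩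
  have hlim := tendsto_cubicPrimitive_zero (Complex.I * (k₁ + k₂ + k₃))
    (k₁ * k₂ + k₁ * k₃ + k₂ * k₃) (k₁ * k₂ * k₃)
  have hval : -(Complex.I * (k₁ + k₂ + k₃))
      + (-(k₁ * k₂ + k₁ * k₃ + k₂ * k₃) / (Complex.I * (k₁ + k₂ + k₃))
        - Complex.I * (k₁ * k₂ * k₃) / (Complex.I * (k₁ + k₂ + k₃)) ^ 2)
      = Complex.I *
        (-(k₁ + k₂ + k₃) ^ 3 + (k₁ + k₂ + k₃) * (k₁ * k₂ + k₁ * k₃ + k₂ * k₃)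
          + k₁ * k₂ * k₃) / (k₁ + k₂ + k₃) ^ 2 := by
    rw [mul_pow, Complex.I_sq, div_mul_eq_div_div, Complex.div_I]
    field_simp
    ring
  rw [hval] at hlim
  refine hlim.congr' ?_
  filter_upwards [self_mem_nhdsWithin] with η₀ hη₀
  have hη : η₀ < 0 := hη₀
  congr 1
  rw [integral_Iic_of_hasDerivAt_of_tendsto' (m := 0) ?_ (hint η₀ hη)
    (tendsto_cubicPrimitive _ _ _ ha), sub_zero]
  intro x hx
  have hx0 : x ≠ 0 := (lt_of_le_of_lt hx hη).ne
  rw [cubicIntegrand_eq_aux _ _ _ _ hx0]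
  exact hasDerivAt_cubicPrimitive _ _ _ hne x hx0

end
end

section
/- Let s ∈ ℂ have strictly negative imaginary part, and let K(η,s) := (1 − i s η) e^{i s η}, so that ∂_η K(η,s) = s² η e^{i s η} and (∂_η K)² − s² K² = e^{2isη}(2s⁴η² + 2is³η − s²). For η₀ < 0 the integral I(η₀) := ∫_{−∞}^{η₀} η^{−1} [ (∂_η K(η,s))² − s² K(η,s)² ] dη = ∫_{−∞}^{η₀} e^{2isη} ( 2s⁴η + 2is³ − s²/η ) dη converges, the complex number −2isη₀ has strictly positive real part, and the logarithmically-subtracted limit exists and equals lim_{η₀ → 0⁻} [ I(η₀) + s²·Log(−2 i s η₀) ] = s²·( 3/2 − γ ), where Log is the principal branch of the complex logarithm and γ is the Euler–Mascheroni constant. (This is the exact evaluation of the time integral producing the parity-odd Chern–Simons correction to the graviton quadratic wavefunction coefficient.) -/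
open Filter MeasureTheory

noncomputable section

/-- The bulk-to-boundary propagator `K(η,s) = (1 − i s η) e^{i s η}` with complex
momentum `s`, as a function of real conformal time. -/
def KbbS (s : ℂ) (η : ℝ) : ℂ :=
  (1 - Complex.I * s * η) * Complex.exp (Complex.I * s * η)

/-- The integrand `η^{−1} [(∂_η K)² − s² K²] = e^{2isη} (2s⁴η + 2is³ − s²/η)`
producing the parity-odd Chern–Simons correction to the graviton quadratic
wavefunction coefficient. -/
def csIntegrand (s : ℂ) (η : ℝ) : ℂ :=
  Complex.exp (2 * Complex.I * s * η) *
    (2 * s ^ 4 * η + 2 * Complex.I * s ^ 3 - s ^ 2 / η)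


open Complex in
lemma cs_bigO (c : ℂ) (hc : 0 < c.re) (a : ℝ) :
    LocallyIntegrableOn (fun t : ℝ => Complex.exp (-c * t)) (Set.Ioi 0) ∧
    (fun t : ℝ => Complex.exp (-c * t)) =O[atTop] (fun t : ℝ => t ^ (-a)) ∧
    (fun t : ℝ => Complex.exp (-c * t)) =O[nhdsWithin 0 (Set.Ioi 0)] (fun t : ℝ => t ^ (-(0:ℝ))) := by
  have hcont : Continuous (fun t : ℝ => Complex.exp (-c * t)) := by fun_prop
  refine ⟨hcont.locallyIntegrable.locallyIntegrableOn _, ?_, ?_⟩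
  · refine Asymptotics.IsBigO.trans ?_ (isLittleO_exp_neg_mul_rpow_atTop hc (-a)).isBigO
    refine Asymptotics.isBigO_of_le _ fun t => ?_
    simp [Complex.norm_exp]
  · simp only [neg_zero, Real.rpow_zero]
    exact (hcont.tendsto 0).isBigO_one ℝ |>.mono nhdsWithin_le_nhds

lemma cs_mel (c : ℂ) (hc : 0 < c.re) (z : ℂ) (hz : 0 < z.re) :
    MellinConvergent (fun t : ℝ => Real.log t • Complex.exp (-c * t)) z ∧
    HasDerivAt (mellin (fun t : ℝ => Complex.exp (-c * t)))
      (mellin (fun t : ℝ => Real.log t • Complex.exp (-c * t)) z) z := by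
  obtain ⟨h1, h2, h3⟩ := cs_bigO c hc (z.re + 1)
  exact mellin_hasDerivAt_of_isBigO_rpow h1 h2 (by linarith) h3 hz

lemma cs_int_log (c : ℂ) (hc : 0 < c.re) :
    IntegrableOn (fun t : ℝ => Real.log t * Complex.exp (-c * t)) (Set.Ioi 0) := by
  simpa [MellinConvergent] using (cs_mel c hc 1 (by simp)).1

lemma cs_int_xlog (c : ℂ) (hc : 0 < c.re) :
    IntegrableOn (fun t : ℝ => (t : ℂ) * (Real.log t * Complex.exp (-c * t))) (Set.Ioi 0) := by
  have := (cs_mel c hc 2 (by simp)).1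
  norm_num [MellinConvergent] at this
  simpa using this

lemma cs_int_exp (c : ℂ) (hc : 0 < c.re) (a : ℝ) :
    IntegrableOn (fun t : ℝ => Complex.exp (-c * t)) (Set.Ioi a) :=
  integrableOn_exp_mul_complex_Ioi (by simpa) a

lemma cs_int_xexp (c : ℂ) (hc : 0 < c.re) :
    IntegrableOn (fun t : ℝ => (t : ℂ) * Complex.exp (-c * t)) (Set.Ioi 0) := by
  obtain ⟨h1, h2, h3⟩ := cs_bigO c hc 3
  have := mellinConvergent_of_isBigO_rpow (s := 2) h1 h2 (by norm_num) h3 (by norm_num)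
  norm_num [MellinConvergent] at this
  simpa using this

noncomputable def csJ (c : ℂ) : ℂ := ∫ t : ℝ in Set.Ioi 0, Real.log t * Complex.exp (-c * t)

lemma csJ_real (r : ℝ) (hr : 0 < r) :
    csJ r = -(Real.eulerMascheroniConstant + Complex.log r) / r := by
  have h := (cs_mel r (by simpa) 1 (by simp)).2
  have e1 : mellin (fun t : ℝ => Real.log t • Complex.exp (-(r:ℂ) * t)) 1 = csJ r := by
    simp [mellin, csJ]
  rw [e1] at h
  have hr' : (r : ℂ) ≠ 0 := by exact_mod_cast hr.ne'
  have h2 : HasDerivAt (fun z : ℂ => (1 / (r:ℂ)) ^ z * Complex.Gamma z)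
      ((1 / (r:ℂ)) ^ (1:ℂ) * Complex.log (1 / r) * 1 * Complex.Gamma 1
        + (1 / (r:ℂ)) ^ (1:ℂ) * (-Real.eulerMascheroniConstant)) 1 :=
    ((hasDerivAt_id (1:ℂ)).const_cpow (Or.inl (by simpa using hr.ne'))).mul
      Complex.hasDerivAt_Gamma_one
  have h3 : mellin (fun t : ℝ => Complex.exp (-(r:ℂ) * t)) =ᶠ[nhds 1]
      (fun z : ℂ => (1 / (r:ℂ)) ^ z * Complex.Gamma z) := by
    have : {z : ℂ | 0 < z.re} ∈ nhds (1:ℂ) :=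
      (isOpen_lt continuous_const Complex.continuous_re).mem_nhds (by simp)
    filter_upwards [this] with z hz
    rw [← Complex.integral_cpow_mul_exp_neg_mul_Ioi hz hr]
    simp [mellin]
  have := h.unique (h2.congr_of_eventuallyEq h3)
  rw [this]
  have hl : Complex.log (1 / (r:ℂ)) = - Complex.log r := by
    rw [one_div, Complex.log_inv]
    rw [Complex.arg_ofReal_of_nonneg hr.le]; exact Real.pi_pos.ne
  rw [hl]
  simp
  field_simp

lemma csJ_diff : DifferentiableOn ℂ csJ {c : ℂ | 0 < c.re} := by
  intro c hc
  have hc : 0 < c.re := hc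
  have hc2 : 0 < ((c.re / 2 : ℝ) : ℂ).re := by simpa using hc
  have hbd := (cs_int_xlog _ hc2).norm
  have := hasDerivAt_integral_of_dominated_loc_of_deriv_le (μ := volume.restrict (Set.Ioi 0))
    (F := fun (c : ℂ) (t : ℝ) => Real.log t * Complex.exp (-c * t))
    (F' := fun (c : ℂ) (t : ℝ) => Real.log t * (Complex.exp (-c * t) * (-1 * t)))
    (x₀ := c) (s := {z | c.re / 2 < z.re}) 
    ((isOpen_lt continuous_const Complex.continuous_re).mem_nhds (by simp; linarith))
    (Eventually.of_forall fun z => by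
      apply Measurable.aestronglyMeasurable
      fun_prop) (cs_int_log c hc) (by
      apply Measurable.aestronglyMeasurable
      fun_prop) (ae_restrict_of_forall_mem measurableSet_Ioi ?_) hbd
      (ae_restrict_of_forall_mem measurableSet_Ioi ?_)
  · exact this.2.differentiableAt.differentiableWithinAt
  · intro t ht z hz
    have ht : 0 < t := ht
    have hz : c.re / 2 < z.re := hz
    simp only [norm_mul, Complex.norm_exp, norm_neg, norm_one, one_mul]
    rw [show ∀ a b d : ℝ, d * (a * b) = b * (d * a) by intros; ring]
    have e1 : (-z * (t:ℂ)).re = -(z.re * t) := by simp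
    have e2 : (-((c.re / 2 : ℝ) : ℂ) * (t:ℂ)).re = -(c.re / 2 * t) := by
      rw [← Complex.ofReal_neg, ← Complex.ofReal_mul, Complex.ofReal_re]; ring
    rw [e1, e2]
    have e3 : Real.exp (-(z.re * t)) ≤ Real.exp (-(c.re / 2 * t)) := by
      apply Real.exp_le_exp.2
      nlinarith
    gcongr
  · intro t ht z hz
    exact ((((hasDerivAt_id z).neg).mul_const (t:ℂ)).cexp).const_mul _

lemma csJ_eq (c : ℂ) (hc : 0 < c.re) :
    csJ c = -(Real.eulerMascheroniConstant + Complex.log c) / c := by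
  have ho : IsOpen {c : ℂ | 0 < c.re} := isOpen_lt continuous_const Complex.continuous_re
  have hg : DifferentiableOn ℂ (fun c : ℂ => -(Real.eulerMascheroniConstant + Complex.log c) / c)
      {c : ℂ | 0 < c.re} := by
    intro z hz
    have hz : 0 < z.re := hz
    have : z ≠ 0 := by rintro rfl; simp at hz
    exact (((Complex.differentiableAt_log (Or.inl hz)).const_add _).neg.div
      differentiableAt_id this).differentiableWithinAt
  refine (csJ_diff.analyticOnNhd ho).eqOn_of_preconnected_of_frequently_eq (hg.analyticOnNhd ho)
    (convex_halfSpace_re_gt 0).isPreconnected (z₀ := 1) (by simp) ?_ hc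
  have ht : Tendsto (fun x : ℝ => (x : ℂ)) (nhdsWithin 1 (Set.Ioi 1)) (nhdsWithin 1 {1}ᶜ) := by
    refine tendsto_nhdsWithin_iff.2 ⟨?_, ?_⟩
    · exact (Complex.continuous_ofReal.tendsto' 1 1 (by simp)).mono_left nhdsWithin_le_nhds
    · filter_upwards [self_mem_nhdsWithin] with x hx
      have hx : 1 < x := hx
      simpa using hx.ne'
  refine ht.frequently (Eventually.frequently ?_)
  filter_upwards [self_mem_nhdsWithin] with x hx
  have hx : 1 < x := hx
  exact csJ_real x (by linarith)

lemma cs_int_neg (s : ℂ) (hs : s.im < 0) (x₀ : ℝ) (hx₀ : 0 < x₀) :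
    IntegrableOn (fun x : ℝ => csIntegrand s (-x)) (Set.Ioi x₀) := by
  set c : ℂ := 2 * Complex.I * s with hcdef
  have hc : 0 < c.re := by simp [hcdef]; linarith
  have hsub : Set.Ioi x₀ ⊆ Set.Ioi 0 := Set.Ioi_subset_Ioi hx₀.le
  have i1 := (cs_int_xexp c hc).mono_set hsub
  have i2 := cs_int_exp c hc x₀
  have i3 : IntegrableOn (fun t : ℝ => Complex.exp (-c * t) / t) (Set.Ioi x₀) := by
    refine Integrable.mono' (i2.norm.mul_const (x₀⁻¹)) ?_
      (ae_restrict_of_forall_mem measurableSet_Ioi ?_)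
    · apply Measurable.aestronglyMeasurable
      fun_prop
    · intro t ht
      have ht : x₀ < t := ht
      have : 0 < t := hx₀.trans ht
      rw [norm_div, div_eq_mul_inv, Complex.norm_real, Real.norm_of_nonneg this.le]
      gcongr
  have := ((i1.const_mul (-2 * s ^ 4)).add (i2.const_mul (2 * Complex.I * s ^ 3))).add
    (i3.const_mul (s ^ 2))
  refine this.congr (Eventually.of_forall fun t => ?_)
  simp only [csIntegrand, Pi.add_apply, hcdef]
  push_cast
  rw [show 2 * Complex.I * s * -(t:ℂ) = -(2 * Complex.I * s) * t by ring]
  rw [div_neg]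
  ring

lemma cs_formula (s : ℂ) (hs : s.im < 0) (x₀ : ℝ) (hx₀ : 0 < x₀) :
    ∫ x in Set.Ioi x₀, csIntegrand s (-x) =
      -(Complex.exp (-(2 * Complex.I * s) * x₀) * (-Complex.I * s ^ 3 * x₀ - 3 / 2 * s ^ 2
        + s ^ 2 * (Complex.log (2 * Complex.I * s) + Real.log x₀)))
      + s ^ 2 * (2 * Complex.I * s) * ∫ x in Set.Ioi x₀,
        (Complex.log (2 * Complex.I * s) * Complex.exp (-(2 * Complex.I * s) * x)
          + Real.log x * Complex.exp (-(2 * Complex.I * s) * x)) := by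
  have hI := cs_int_neg s hs x₀ hx₀
  have hcdef : ∃ c : ℂ, c = 2 * Complex.I * s := ⟨_, rfl⟩
  obtain ⟨c, hcdef⟩ := hcdef
  rw [← hcdef]
  have hc : 0 < c.re := by simp [hcdef]; linarith
  have hsub : Set.Ioi x₀ ⊆ Set.Ioi 0 := Set.Ioi_subset_Ioi hx₀.le
  have i1 := (cs_int_xexp c hc).mono_set hsub
  have i2 := cs_int_exp c hc x₀
  have i3 := (cs_int_log c hc).mono_set hsub
  have iL := (i2.const_mul (Complex.log c)).add i3
  have iP : IntegrableOn (fun x : ℝ => Complex.exp (-c * x) * (-Complex.I * s ^ 3 * x - 3 / 2 * s ^ 2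
        + s ^ 2 * (Complex.log c + Real.log x))) (Set.Ioi x₀) := by
    have := ((i1.const_mul (-Complex.I * s ^ 3)).add (i2.const_mul (-(3 / 2) * s ^ 2))).add
      (iL.const_mul (s ^ 2))
    refine this.congr (Eventually.of_forall fun t => ?_)
    simp only [Pi.add_apply]
    ring
  have iP' := hI.sub (iL.const_mul (s ^ 2 * c))
  have hd : ∀ x ∈ Set.Ici x₀, HasDerivAt (fun x : ℝ => Complex.exp (-c * x) *
      (-Complex.I * s ^ 3 * x - 3 / 2 * s ^ 2 + s ^ 2 * (Complex.log c + Real.log x)))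
      (csIntegrand s (-x) - s ^ 2 * c * (Complex.log c * Complex.exp (-c * x)
          + Real.log x * Complex.exp (-c * x))) x := by
    intro x hx
    have hx : 0 < x := hx₀.trans_le hx
    have hx' : (x : ℂ) ≠ 0 := by exact_mod_cast hx.ne'
    have d0 : HasDerivAt (fun x : ℝ => (x : ℂ)) 1 x := Complex.ofRealCLM.hasDerivAt
    have d1 := (d0.const_mul (-c)).cexp
    have d2 : HasDerivAt (fun x : ℝ => (Real.log x : ℂ)) ((x⁻¹ : ℝ) : ℂ) x :=
      (Real.hasDerivAt_log hx.ne').ofReal_comp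
    have d3 := ((d0.const_mul (-Complex.I * s ^ 3)).sub_const (3 / 2 * s ^ 2)).add
      ((d2.const_add (Complex.log c)).const_mul (s ^ 2))
    refine (d1.mul d3).congr_deriv ?_
    simp only [csIntegrand]
    push_cast
    rw [show 2 * Complex.I * s * -(x:ℂ) = -c * x by rw [hcdef]; ring]
    simp only [Pi.add_apply]
    generalize Complex.exp (-c * x) = E
    generalize Complex.log c = l
    rw [hcdef, div_neg, div_eq_mul_inv]
    linear_combination (2 * E * s ^ 4 * x) * Complex.I_sq
  have h0 := tendsto_zero_of_hasDerivAt_of_integrableOn_Ioi (a := x₀)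
    (fun x hx => hd x (Set.Ioi_subset_Ici_self hx)) iP' iP
  have key := integral_Ioi_of_hasDerivAt_of_tendsto' hd iP' h0
  have e : ∫ x in Set.Ioi x₀, (csIntegrand s (-x) - s ^ 2 * c * (Complex.log c * Complex.exp (-c * x)
          + Real.log x * Complex.exp (-c * x))) = (∫ x in Set.Ioi x₀, csIntegrand s (-x))
      - s ^ 2 * c * ∫ x in Set.Ioi x₀, (Complex.log c * Complex.exp (-c * x)
          + Real.log x * Complex.exp (-c * x)) := by
    rw [← integral_const_mul]
    exact integral_sub hI (iL.const_mul (s ^ 2 * c))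
  rw [e] at key
  linear_combination key

lemma cs_tail {f : ℝ → ℂ} (hf : IntegrableOn f (Set.Ioi 0)) :
    Tendsto (fun x₀ : ℝ => ∫ x in Set.Ioi x₀, f x) (nhdsWithin 0 (Set.Ioi 0))
      (nhds (∫ x in Set.Ioi 0, f x)) := by
  have h : ∀ x₀ ∈ Set.Ioi (0:ℝ), ∫ x in Set.Ioi x₀, f x
      = ∫ x in Set.Ioi 0, (Set.Ioi x₀).indicator f x := by
    intro x₀ hx₀
    rw [setIntegral_indicator measurableSet_Ioi,
      Set.inter_eq_self_of_subset_right (Set.Ioi_subset_Ioi (le_of_lt hx₀))]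
  refine Tendsto.congr' (f₁ := fun x₀ => ∫ x in Set.Ioi 0, (Set.Ioi x₀).indicator f x) ?_ ?_
  · filter_upwards [self_mem_nhdsWithin] with x hx using (h x hx).symm
  refine tendsto_integral_filter_of_dominated_convergence (fun x => ‖f x‖) ?_ ?_ hf.norm ?_
  · exact Eventually.of_forall fun x₀ => hf.aestronglyMeasurable.indicator measurableSet_Ioi
  · exact Eventually.of_forall fun x₀ => Eventually.of_forall fun x => norm_indicator_le_norm_self _ _
  · refine ae_restrict_of_forall_mem measurableSet_Ioi fun x hx => ?_
    refine tendsto_const_nhds.congr' ?_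
    have : Set.Iio x ∈ nhds (0:ℝ) := Iio_mem_nhds hx
    filter_upwards [nhdsWithin_le_nhds this] with y hy
    rw [Set.indicator_of_mem (show x ∈ Set.Ioi y from hy)]

lemma cs_explog (c l : ℂ) :
    Tendsto (fun x : ℝ => (1 - Complex.exp (-c * x)) * (l + Real.log x))
      (nhdsWithin 0 (Set.Ioi 0)) (nhds 0) := by
  have hE : Tendsto (fun x : ℝ => 1 - Complex.exp (-c * x)) (nhdsWithin 0 (Set.Ioi 0)) (nhds 0) := by
    have : Continuous (fun x : ℝ => 1 - Complex.exp (-c * x)) := by fun_prop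
    exact (this.tendsto' 0 0 (by simp)).mono_left nhdsWithin_le_nhds
  have hd : HasDerivAt (fun x : ℝ => 1 - Complex.exp (-c * x)) c 0 := by
    have d0 : HasDerivAt (fun x : ℝ => (x : ℂ)) 1 0 := Complex.ofRealCLM.hasDerivAt
    refine ((d0.const_mul (-c)).cexp.const_sub 1).congr_deriv ?_
    simp
  have hO : (fun x : ℝ => 1 - Complex.exp (-c * x)) =O[nhdsWithin 0 (Set.Ioi 0)] (fun x : ℝ => x) := by
    have := hd.isBigO_sub
    simp only [Complex.ofReal_zero, mul_zero, Complex.exp_zero, sub_self, sub_zero] at this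
    exact this.mono nhdsWithin_le_nhds
  have h2 : (fun x : ℝ => (1 - Complex.exp (-c * x)) * (Real.log x : ℂ))
      =O[nhdsWithin 0 (Set.Ioi 0)] (fun x : ℝ => x * Real.log x) := by
    refine hO.mul (Asymptotics.isBigO_of_le _ fun x => ?_)
    simp
  have h3 : Tendsto (fun x : ℝ => x * Real.log x) (nhdsWithin 0 (Set.Ioi 0)) (nhds 0) :=
    (Real.continuous_mul_log.tendsto' 0 0 (by simp)).mono_left nhdsWithin_le_nhds
  have := (hE.mul_const l).add (h2.trans_tendsto h3)
  simp only [zero_mul, add_zero] at this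
  refine this.congr fun x => ?_
  ring

/-- With `Im s < 0` (Bunch–Davies iε prescription): the derivative of `K` is
`s²η e^{isη}` and `(∂_η K)² − s²K² = e^{2isη}(2s⁴η² + 2is³η − s²)`; the integral
`I(η₀)` converges for `η₀ < 0`; `−2isη₀` has strictly positive real part; and the
logarithmically-subtracted limit is
`lim_{η₀→0⁻} [I(η₀) + s² Log(−2isη₀)] = s²(3/2 − γ)`. -/
theorem chernSimons_graviton_integral (s : ℂ) (hs : s.im < 0) :
    (∀ η : ℝ, deriv (KbbS s) η = s ^ 2 * η * Complex.exp (Complex.I * s * η)) ∧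
    (∀ η : ℝ, (deriv (KbbS s) η) ^ 2 - s ^ 2 * (KbbS s η) ^ 2
        = Complex.exp (2 * Complex.I * s * η) *
            (2 * s ^ 4 * (η : ℂ) ^ 2 + 2 * Complex.I * s ^ 3 * η - s ^ 2)) ∧
    (∀ η₀ : ℝ, η₀ < 0 → IntegrableOn (csIntegrand s) (Set.Iic η₀)) ∧
    (∀ η₀ : ℝ, η₀ < 0 → 0 < (-2 * Complex.I * s * η₀).re) ∧
    Tendsto
      (fun η₀ : ℝ => (∫ η in Set.Iic η₀, csIntegrand s η)
        + s ^ 2 * Complex.log (-2 * Complex.I * s * η₀))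
      (nhdsWithin 0 (Set.Iio 0))
      (nhds (s ^ 2 * (3 / 2 - (Real.eulerMascheroniConstant : ℂ)))) := by
  have hc : 0 < (2 * Complex.I * s).re := by simp; linarith
  have hc0 : 2 * Complex.I * s ≠ 0 := by
    intro h; rw [h] at hc; simp at hc
  have hder : ∀ η : ℝ, deriv (KbbS s) η = s ^ 2 * η * Complex.exp (Complex.I * s * η) := by
    intro η
    have d0 : HasDerivAt (fun x : ℝ => (x : ℂ)) 1 η := Complex.ofRealCLM.hasDerivAt
    have d1 := d0.const_mul (Complex.I * s)
    have : HasDerivAt (KbbS s) _ η := (d1.const_sub 1).mul d1.cexp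
    rw [this.deriv]
    linear_combination (-s ^ 2 * η * Complex.exp (Complex.I * s * η)) * Complex.I_sq
  have hneg : ∀ η₀ : ℝ, ∫ η in Set.Iic η₀, csIntegrand s η
      = ∫ x in Set.Ioi (-η₀), csIntegrand s (-x) := by
    intro η₀
    rw [← integral_comp_neg_Iic]
    simp
  refine ⟨hder, ?_, ?_, ?_, ?_⟩
  · intro η
    rw [hder, KbbS]
    rw [show 2 * Complex.I * s * (η:ℂ) = Complex.I * s * η + Complex.I * s * η by ring,
      Complex.exp_add]
    generalize Complex.exp (Complex.I * s * η) = E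
    linear_combination (-s ^ 4 * η ^ 2 * E ^ 2) * Complex.I_sq
  · intro η₀ hη
    have := (cs_int_neg s hs (-η₀) (by linarith)).comp_neg_Iio
    rw [integrableOn_Iic_iff_integrableOn_Iio]
    simpa using this
  · intro η₀ hη
    simp
    nlinarith
  · have hf : IntegrableOn (fun x : ℝ => Complex.log (2 * Complex.I * s)
          * Complex.exp (-(2 * Complex.I * s) * x)
          + Real.log x * Complex.exp (-(2 * Complex.I * s) * x)) (Set.Ioi 0) :=
      ((cs_int_exp _ hc 0).const_mul _).add (cs_int_log _ hc)
    have hv : ∫ x : ℝ in Set.Ioi 0, (Complex.log (2 * Complex.I * s)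
          * Complex.exp (-(2 * Complex.I * s) * x)
          + Real.log x * Complex.exp (-(2 * Complex.I * s) * x))
        = -Real.eulerMascheroniConstant / (2 * Complex.I * s) := by
      rw [integral_add ((cs_int_exp _ hc 0).const_mul _) (cs_int_log _ hc), integral_const_mul,
        integral_exp_mul_complex_Ioi (by rw [Complex.neg_re]; linarith)]
      have := csJ_eq _ hc
      rw [csJ] at this
      rw [this]
      rw [Complex.ofReal_zero, mul_zero, Complex.exp_zero, neg_div_neg_eq]
      ring
    have t1 := cs_tail hf
    rw [hv] at t1
    have t2 := cs_explog (2 * Complex.I * s) (Complex.log (2 * Complex.I * s))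
    have t3 : Tendsto (fun x : ℝ => -(Complex.exp (-(2 * Complex.I * s) * x) *
        (-Complex.I * s ^ 3 * x - 3 / 2 * s ^ 2))) (nhdsWithin 0 (Set.Ioi 0))
        (nhds (3 / 2 * s ^ 2)) := by
      have : Continuous (fun x : ℝ => -(Complex.exp (-(2 * Complex.I * s) * x) *
        (-Complex.I * s ^ 3 * x - 3 / 2 * s ^ 2))) := by fun_prop
      exact (this.tendsto' 0 _ (by simp)).mono_left nhdsWithin_le_nhds
    have t4 := (t3.add (t2.const_mul (s ^ 2))).add (t1.const_mul (s ^ 2 * (2 * Complex.I * s)))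
    have hn : Tendsto (fun x : ℝ => -x) (nhdsWithin 0 (Set.Iio 0)) (nhdsWithin 0 (Set.Ioi 0)) := by
      simpa using tendsto_neg_nhdsLT (a := (0:ℝ))
    have t5 := t4.comp hn
    have hlim : 3 / 2 * s ^ 2 + s ^ 2 * 0 + s ^ 2 * (2 * Complex.I * s)
        * (-(Real.eulerMascheroniConstant : ℂ) / (2 * Complex.I * s))
        = s ^ 2 * (3 / 2 - (Real.eulerMascheroniConstant : ℂ)) := by
      rw [mul_assoc (s ^ 2) (2 * Complex.I * s), mul_div_cancel₀ _ hc0]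
      ring
    rw [hlim] at t5
    refine t5.congr' ?_
    filter_upwards [self_mem_nhdsWithin] with η hη
    have hη : 0 < -η := neg_pos.2 hη
    rw [hneg, cs_formula s hs (-η) hη,
      show -2 * Complex.I * s * (η:ℂ) = (2 * Complex.I * s) * ((-η : ℝ) : ℂ) by push_cast; ring,
      Complex.log_mul_ofReal _ hη _ hc0]
    simp only [Function.comp]
    ring

end
end

section
/- Let E be a real normed vector space, x₀ ∈ E, r > 0. Let F : E → ℂ be differentiable on B(x₀, r) with fderiv F x₀ = 0 and with x ↦ fderiv F x Lipschitz on B(x₀, r), and let G : E → ℂ be Lipschitz on B(x₀, r). Let x : ℝ → E satisfy x(λ) − x₀ = O(λ) as λ → 0. Then the perturbed action evaluated on the perturbed saddle agrees with its naive first-order expansion up to second order: ( F(x(λ)) + λ·G(x(λ)) ) − ( F(x₀) + λ·G(x₀) ) = O(λ²) as λ → 0. (This renders the paper's 'first-order approximation' lemma at the level of the on-shell classical action: evaluating the full action S₁ + λS₂ on the exact saddle versus on the unperturbed saddle of S₁ produces an error of order λ².) -/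
open Filter Asymptotics Metric

/-- First-order approximation lemma at the level of the on-shell classical action:
with `F` (the unperturbed action `S₁`) differentiable on a ball around the saddle
`x₀` with `fderiv F x₀ = 0` and Lipschitz Fréchet derivative, `G` (the perturbing
action `S₂`) Lipschitz on the ball, and `x(λ) − x₀ = O(λ)`, the perturbed action
evaluated on the perturbed saddle agrees with its naive first-order expansion up
to second order: `(F(x(λ)) + λG(x(λ))) − (F(x₀) + λG(x₀)) = O(λ²)`. -/
theorem first_order_approximation_lemma {E : Type*} [NormedAddCommGroup E] [NormedSpace ℝ E]
    (F G : E → ℂ) (x₀ : E) (r : ℝ) (hr : 0 < r)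
    (hdiff : DifferentiableOn ℝ F (ball x₀ r))
    (hcrit : fderiv ℝ F x₀ = 0)
    (C : NNReal) (hlip : LipschitzOnWith C (fun x => fderiv ℝ F x) (ball x₀ r))
    (D : NNReal) (hG : LipschitzOnWith D G (ball x₀ r))
    (x : ℝ → E)
    (hx : (fun lam : ℝ => x lam - x₀) =O[nhds (0 : ℝ)] fun lam => lam) :
    (fun lam : ℝ => (F (x lam) + (lam : ℂ) * G (x lam)) - (F x₀ + (lam : ℂ) * G x₀))
      =O[nhds (0 : ℝ)] fun lam => lam ^ 2 := by
  have h0 : x₀ ∈ ball x₀ r := mem_ball_self hr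
  have hF : ∀ y ∈ ball x₀ r, ‖F y - F x₀‖ ≤ C * ‖y - x₀‖ * ‖y - x₀‖ := by
    intro y hy
    have hsub : ∀ z ∈ closedBall x₀ ‖y - x₀‖, z ∈ ball x₀ r := by
      intro z hz
      rw [mem_closedBall] at hz
      rw [mem_ball, dist_eq_norm] at hy
      rw [mem_ball]
      exact lt_of_le_of_lt hz hy
    refine (convex_closedBall x₀ ‖y - x₀‖).norm_image_sub_le_of_norm_fderiv_le (𝕜 := ℝ)
      (f := F) ?_ ?_ ?_ ?_
    · intro z hz
      exact hdiff.differentiableAt (isOpen_ball.mem_nhds (hsub z hz))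
    · intro z hz
      have h := hlip.norm_sub_le (hsub z hz) h0
      simp only [hcrit, sub_zero] at h
      rw [mem_closedBall, dist_eq_norm] at hz
      exact h.trans (mul_le_mul_of_nonneg_left hz C.2)
    · exact mem_closedBall_self (norm_nonneg _)
    · rw [mem_closedBall, dist_eq_norm]
  obtain ⟨K, hKpos, hK⟩ := hx.exists_pos
  rw [isBigOWith_iff] at hK
  have hsmall : ∀ᶠ lam : ℝ in nhds 0, K * ‖lam‖ < r := by
    have hc : Continuous fun lam : ℝ => K * ‖lam‖ := by fun_prop
    exact hc.continuousAt.eventually_lt continuousAt_const (by simpa using hr)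
  refine IsBigO.of_bound (C * K * K + D * K) ?_
  filter_upwards [hK, hsmall] with lam h1 h2
  have hy : x lam ∈ ball x₀ r := by
    rw [mem_ball, dist_eq_norm]
    exact lt_of_le_of_lt h1 h2
  have hF1 := hF _ hy
  have hG1 := hG.norm_sub_le hy h0
  have e : (F (x lam) + (lam : ℂ) * G (x lam)) - (F x₀ + (lam : ℂ) * G x₀)
      = (F (x lam) - F x₀) + (lam : ℂ) * (G (x lam) - G x₀) := by ring
  have hn : ‖(lam : ℂ)‖ = ‖lam‖ := Complex.norm_real lam
  rw [e, norm_pow]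
  calc _ ≤ ‖F (x lam) - F x₀‖ + ‖(lam : ℂ) * (G (x lam) - G x₀)‖ := norm_add_le _ _
    _ = ‖F (x lam) - F x₀‖ + ‖lam‖ * ‖G (x lam) - G x₀‖ := by rw [norm_mul, hn]
    _ ≤ C * ‖x lam - x₀‖ * ‖x lam - x₀‖ + ‖lam‖ * (D * ‖x lam - x₀‖) := by gcongr
    _ ≤ C * (K * ‖lam‖) * (K * ‖lam‖) + ‖lam‖ * (D * (K * ‖lam‖)) := by gcongr
    _ = _ := by ring
end
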